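/- Let e ≥ 42, and in four variables let F = x^{14}y^{14}z^{e-28} and G = x^{e-12}y^4z^4w^4, i.e., exponent vectors (14,14,e-28,0) and (e-12,4,4,4). Let h(i) be the number of monomials of degree i dividing F or G. Then h(e-14) = 245, h(e-13) = 230, h(e-12) = 216, and h(e-13)^2 < h(e-14)·h(e-12); in particular h is not log-concave. (This gives an infinite family of non-log-concave pure O-sequences of codimension 4 and type 2.) -/

import Mathlib

/-- `divCountSet M i` is the number of monomials of degree `i` (in `r`
variables) dividing at least one monomial whose exponent vector lies in `M`:
the `i`-th entry of the pure `O`-sequence generated by `M`. -/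
noncomputable def divCountSet {r : ℕ} (M : Set (Fin r → ℕ)) (i : ℕ) : ℕ :=
  {b : Fin r → ℕ | (∑ j, b j = i) ∧ ∃ a ∈ M, ∀ j, b j ≤ a j}.ncard

open Finset

/-!
Both generators have degree `e`, so complementation `b ↦ a - b` turns the count of divisors in
degree `e - d` into the count in degree `d`, for `12 ≤ d ≤ 14`. The first generator involves three
variables, all with exponent at least `d`, so all monomials of degree `d` in these variables divide
it. For the second, the exponents of `y`, `z`, `w` are arbitrary in `[0, 4]` and that of `x` is then
determined, giving `5 ^ 3`. The gcd of the generators is `x^14 y^4 z^4`, of degree `22 < e - d`, so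
nothing is counted twice.
-/

theorem card_piAntidiag_eq_multichoose {ι : Type*} [DecidableEq ι] (s : Finset ι) (n : ℕ) :
    #(piAntidiag s n) = (#s).multichoose n := by
  rw [← card_finsuppAntidiag_nat_eq_multichoose, finsuppAntidiag, card_map, card_attach]

section Divisors

variable {ι : Type*} [Fintype ι] [DecidableEq ι] {a b : ι → ℕ} {i k : ℕ}

/-- The exponent vectors of the monomials of degree `i` dividing the monomial with exponent vector
`a`, in variables indexed by `ι`; divisibility is the pointwise order. -/
def divisorsOfDegree (a : ι → ℕ) (i : ℕ) : Finset (ι → ℕ) :=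
  {b ∈ Iic a | ∑ j, b j = i}

theorem mem_divisorsOfDegree : b ∈ divisorsOfDegree a i ↔ b ≤ a ∧ ∑ j, b j = i := by
  simp only [divisorsOfDegree, mem_filter, mem_Iic]

theorem divisorsOfDegree_inf (a b : ι → ℕ) (i : ℕ) :
    divisorsOfDegree (a ⊓ b) i = divisorsOfDegree a i ∩ divisorsOfDegree b i := by
  ext c
  simp only [mem_inter, mem_divisorsOfDegree, le_inf_iff]
  tauto

theorem divisorsOfDegree_eq_empty (h : ∑ j, a j < i) : divisorsOfDegree a i = ∅ := by
  refine eq_empty_of_forall_notMem fun b hb => ?_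
  obtain ⟨hba, hdeg⟩ := mem_divisorsOfDegree.1 hb
  exact (hdeg ▸ sum_le_sum fun j _ => hba j).not_gt h

theorem sub_mem_divisorsOfDegree (h : ∑ j, a j = i + k) (hb : b ∈ divisorsOfDegree a i) :
    a - b ∈ divisorsOfDegree a k := by
  obtain ⟨hba, hdeg⟩ := mem_divisorsOfDegree.1 hb
  refine mem_divisorsOfDegree.2 ⟨tsub_le_self, ?_⟩
  calc ∑ j, (a - b) j = ∑ j, a j - ∑ j, b j := sum_tsub_distrib univ fun j _ => hba j
    _ = k := by lia

theorem card_divisorsOfDegree_symm_of_eq_add (h : ∑ j, a j = i + k) :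
    #(divisorsOfDegree a i) = #(divisorsOfDegree a k) :=
  card_nbij' (a - ·) (a - ·) (fun _ hb => sub_mem_divisorsOfDegree h hb)
    (fun _ hb => sub_mem_divisorsOfDegree (h.trans (add_comm i k)) hb)
    (fun _ hb => tsub_tsub_cancel_of_le (mem_divisorsOfDegree.1 hb).1)
    (fun _ hb => tsub_tsub_cancel_of_le (mem_divisorsOfDegree.1 hb).1)

theorem divisorsOfDegree_eq_piAntidiag (h : ∀ j, a j ≠ 0 → i ≤ a j) :
    divisorsOfDegree a i = piAntidiag {j | a j ≠ 0} i := by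
  ext b
  have hsum (hsupp : ∀ j, b j ≠ 0 → a j ≠ 0) : ∑ j with a j ≠ 0, b j = ∑ j, b j :=
    sum_filter_of_ne fun j _ => hsupp j
  simp only [mem_divisorsOfDegree, mem_piAntidiag, mem_filter_univ]
  constructor
  · rintro ⟨hba, hdeg⟩
    have hsupp (j : ι) (hj : b j ≠ 0) : a j ≠ 0 :=
      ((Nat.pos_of_ne_zero hj).trans_le (hba j)).ne'
    exact ⟨(hsum hsupp).trans hdeg, hsupp⟩
  · rintro ⟨hdeg, hsupp⟩
    rw [hsum hsupp] at hdeg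
    refine ⟨fun j => ?_, hdeg⟩
    obtain hbj | hbj := eq_or_ne (b j) 0
    · exact hbj ▸ Nat.zero_le _
    · calc b j ≤ ∑ l, b l := single_le_sum_of_canonicallyOrdered (mem_univ j)
        _ = i := hdeg
        _ ≤ a j := h j (hsupp j hbj)

theorem card_divisorsOfDegree_eq_multichoose (h : ∀ j, a j ≠ 0 → i ≤ a j) :
    #(divisorsOfDegree a i) = Nat.multichoose #{j | a j ≠ 0} i := by
  rw [divisorsOfDegree_eq_piAntidiag h, card_piAntidiag_eq_multichoose]

end Divisors

theorem card_divisorsOfDegree_eq_prod {r : ℕ} {a : Fin (r + 1) → ℕ} {i : ℕ} (j : Fin (r + 1))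
    (hi : ∑ k, j.removeNth a k ≤ i) (hij : i ≤ a j) :
    #(divisorsOfDegree a i) = ∏ k, (j.removeNth a k + 1) := by
  have hcard : #(Iic (j.removeNth a)) = ∏ k, (j.removeNth a k + 1) := by
    simp only [Pi.card_Iic, Nat.card_Iic]
  rw [← hcard]
  refine card_nbij' j.removeNth (fun c => j.insertNth (i - ∑ k, c k) c) (fun b hb => ?_)
    (fun c hc => ?_) (fun b hb => ?_) fun c _ => Fin.removeNth_insertNth (α := fun _ => ℕ) j _ c
  · exact mem_Iic.2 fun k => (mem_divisorsOfDegree.1 hb).1 (j.succAbove k)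
  · have hca : c ≤ j.removeNth a := mem_Iic.1 hc
    have hsum : ∑ k, c k ≤ i := (sum_le_sum fun k _ => hca k).trans hi
    refine mem_divisorsOfDegree.2 ⟨Fin.insertNth_le_iff.2 ⟨by lia, hca⟩, ?_⟩
    simp only [Fin.sum_univ_succAbove _ j, Fin.insertNth_apply_same, Fin.insertNth_apply_succAbove]
    lia
  · have hdeg := (mem_divisorsOfDegree.1 hb).2
    rw [Fin.sum_univ_succAbove _ j] at hdeg
    refine Fin.insertNth_eq_iff.2 ⟨?_, rfl⟩
    simp only [Fin.removeNth]
    lia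

theorem divCountSet_pair {r : ℕ} (a b : Fin r → ℕ) (i : ℕ) :
    divCountSet {a, b} i = #(divisorsOfDegree a i ∪ divisorsOfDegree b i) := by
  rw [divCountSet, ← Set.ncard_coe_finset]
  congr 1
  ext c
  simp only [Set.mem_insert_iff, Set.mem_singleton_iff, exists_eq_or_imp, exists_eq_left,
    Set.mem_ofPred_eq, coe_union, Set.mem_union, mem_coe, mem_divisorsOfDegree, Pi.le_def]
  tauto

theorem divCountSet_pair_of_sum_inf_lt {r : ℕ} {a b : Fin r → ℕ} {i : ℕ}
    (h : ∑ j, (a ⊓ b) j < i) :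
    divCountSet {a, b} i = #(divisorsOfDegree a i) + #(divisorsOfDegree b i) := by
  rw [divCountSet_pair, card_union_of_disjoint]
  rw [disjoint_iff_inter_eq_empty, ← divisorsOfDegree_inf, divisorsOfDegree_eq_empty h]

section Generators

variable {e d : ℕ}

theorem card_divisorsOfDegree_leftGenerator (he : 42 ≤ e) (hd : d ≤ 14) :
    #(divisorsOfDegree ![14, 14, e - 28, 0] (e - d)) = Nat.multichoose 3 d := by
  have hdeg : ∑ j, ![14, 14, e - 28, 0] j = e - d + d := by
    simp only [Fin.sum_univ_four, Matrix.cons_val]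
    lia
  have hz : d ≤ e - 28 := by lia
  have hlarge : ∀ j, ![14, 14, e - 28, 0] j ≠ 0 → d ≤ ![14, 14, e - 28, 0] j := by
    rintro (j : Fin 4) hj
    match j with
    | 0 | 1 => exact hd
    | 2 => exact hz
    | 3 => exact absurd rfl hj
  have hsupp : ({j | ![14, 14, e - 28, 0] j ≠ 0} : Finset (Fin 4)) = {0, 1, 2} := by
    ext j
    have hz_ne : e - 28 ≠ 0 := by lia
    fin_cases j <;> simp [hz_ne]
  rw [card_divisorsOfDegree_symm_of_eq_add hdeg, card_divisorsOfDegree_eq_multichoose hlarge, hsupp]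
  rfl

theorem card_divisorsOfDegree_rightGenerator (he : 42 ≤ e) (hd : 12 ≤ d) (hd' : d ≤ 14) :
    #(divisorsOfDegree ![e - 12, 4, 4, 4] (e - d)) = 5 ^ 3 := by
  have hdeg : ∑ j, ![e - 12, 4, 4, 4] j = e - d + d := by
    simp only [Fin.sum_univ_four, Matrix.cons_val]
    lia
  have hyzw : ∑ k, Fin.removeNth 0 ![e - 12, 4, 4, 4] k ≤ d := hd
  have hx : d ≤ ![e - 12, 4, 4, 4] 0 := show d ≤ e - 12 by lia
  rw [card_divisorsOfDegree_symm_of_eq_add hdeg, card_divisorsOfDegree_eq_prod 0 hyzw hx]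
  rfl

theorem divCountSet_generators (he : 42 ≤ e) (hd : 12 ≤ d) (hd' : d ≤ 14) :
    divCountSet {![14, 14, e - 28, 0], ![e - 12, 4, 4, 4]} (e - d) =
      Nat.multichoose 3 d + 5 ^ 3 := by
  have hgcd : ∑ j, (![14, 14, e - 28, 0] ⊓ ![e - 12, 4, 4, 4]) j < e - d := by
    simp only [Fin.sum_univ_four, Pi.inf_apply, Matrix.cons_val]
    lia
  rw [divCountSet_pair_of_sum_inf_lt hgcd, card_divisorsOfDegree_leftGenerator he hd',
    card_divisorsOfDegree_rightGenerator he hd hd']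

end Generators

/-- **A non-log-concave pure `O`-sequence of codimension 4 and type 2.**
For `e ≥ 42`, the pure `O`-sequence `h` generated by `F = x^14 y^14 z^(e-28)`
and `G = x^(e-12) y^4 z^4 w^4` satisfies `h (e-14) = 245`, `h (e-13) = 230`,
`h (e-12) = 216`, and `h (e-13)^2 < h (e-14) * h (e-12)`; in particular `h`
is not log-concave. -/
theorem stmt_9 (e : ℕ) (he : 42 ≤ e)
    (M : Set (Fin 4 → ℕ))
    (hM : M = {![14, 14, e - 28, 0], ![e - 12, 4, 4, 4]}) :
    divCountSet M (e - 14) = 245 ∧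
      divCountSet M (e - 13) = 230 ∧
      divCountSet M (e - 12) = 216 ∧
      (divCountSet M (e - 13)) ^ 2 < divCountSet M (e - 14) * divCountSet M (e - 12) := by
  subst hM
  have h14 := divCountSet_generators (d := 14) he (by decide) le_rfl
  have h13 := divCountSet_generators (d := 13) he (by decide) (by decide)
  have h12 := divCountSet_generators (d := 12) he le_rfl (by decide)
  norm_num [h14, h13, h12, Nat.multichoose_eq, Nat.choose]
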